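/- The map (f,T) ↦ K(f,T) is upper semi-continuous from 𝓒^1 × 𝓔^1 into the space of nonempty compact subsets of ℝ/ℤ. -/

import Mathlib

/-!
Let `(f_n, T_n) → (f, T)` in `C^1` and `x_n ∈ Λ_{f_n,T_n,g_n}` with `x_n → x_0`, where `g_n` is a
Lipschitz calibrated sub-action of `(f_n, T_n)`.

The first point is that the `g_n` are equi-Lipschitz. Some iterate of the limit lift has derivative
at least `2` in absolute value, so by `C^1` convergence the same iterate of the lift `F_n` has
derivative at least `3/2` for almost all `n`
along the ultrafilter below (`eventually_expanding`). Comparing a calibrated backward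
orbit of `s` with the orbit of `t` through the same inverse branch improves a Lipschitz constant
`K` of `g_n` to `(2/3) (K + L)`, with `L` a Lipschitz constant of Birkhoff sums which is uniform
in `n`. Since `g_n` is Lipschitz with some constant, it is Lipschitz with constant `2 L`
(`lip_bound`).

After subtracting `g_n(0)` the sub-actions converge along a non-principal ultrafilter to a
Lipschitz function `g`; the ultrafilter replaces the Arzelà–Ascoli theorem and all extractions of
subsequences. The numbers `β(f_n, T_n)` converge as well, to some `b`, and by compactness of the
circle `g` solves the calibrated sub-action equation of `(f, T)` with constant `b`
(`mem_Kset_of_limit`). Such a constant can only be `β(f, T)` (`beta_eq_of_calibrated`): integrating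
the inequality gives `∫ f dμ ≤ b` for every invariant `μ`, and a Krylov–Bogoliubov measure built on
backward calibrated orbits attains `b`. The orbits witnessing `x_n ∈ Λ_{f_n,T_n,g_n}` converge to
orbits witnessing `x_0 ∈ Λ_{f,T,g}`.
-/

open MeasureTheory Topology Filter Set
open scoped UniformConvergence

noncomputable section

/-- The circle `ℝ/ℤ`. -/
abbrev Circle1 : Type := AddCircle (1 : ℝ)

/-- The canonical representative in `[0,1)` of a point of `ℝ/ℤ`. -/
noncomputable def rep (z : Circle1) : ℝ := (AddCircle.equivIco 1 0 z : ℝ)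

/-- The circle map induced by a lift `F : ℝ → ℝ`. -/
noncomputable def cmap (F : ℝ → ℝ) : Circle1 → Circle1 := fun z => ((F (rep z) : ℝ) : Circle1)

/-- The data determining the `C^r` topology: all derivatives of order `≤ r`, viewed in the
space of functions `ℝ → ℝ` with the uniform-convergence topology. -/
noncomputable def crSeq (r : ℕ∞) (f : ℝ → ℝ) : ℕ → (ℝ →ᵤ ℝ) :=
  fun k => UniformFun.ofFun (if (k : ℕ∞) ≤ r then iteratedDeriv k f else 0)

/-- The space `𝓒^r` of `C^r` functions `ℝ/ℤ → ℝ`. -/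
def CrFun (r : ℕ∞) : Type := {f : Circle1 → ℝ // ContDiff ℝ r fun x : ℝ => f ↑x}

/-- The `C^r` topology on `𝓒^r`. -/
noncomputable instance (r : ℕ∞) : TopologicalSpace (CrFun r) :=
  TopologicalSpace.induced (fun f : CrFun r => crSeq r fun x : ℝ => f.1 ↑x) inferInstance

/-- `F : ℝ → ℝ` is a lift of a `C^r` expanding circle map: it is `C^r`, sends `x+1` to
`F x + d` for a fixed integer `d`, and `|(Fⁿ)'| ≥ C λⁿ` for some `C > 0`, `λ > 1`. -/
def ExpandingLift (r : ℕ∞) (F : ℝ → ℝ) : Prop :=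
  ContDiff ℝ r F ∧ (∃ d : ℤ, ∀ x : ℝ, F (x + 1) = F x + d) ∧
    ∃ C > (0 : ℝ), ∃ l > (1 : ℝ), ∀ n : ℕ, 1 ≤ n → ∀ x : ℝ, C * l ^ n ≤ |deriv (F^[n]) x|

/-- The space `𝓔^r` of (lifts of) `C^r` expanding circle maps, with the `C^r` topology. -/
def ExpMap (r : ℕ∞) : Type := {F : ℝ → ℝ // ExpandingLift r F}

noncomputable instance (r : ℕ∞) : TopologicalSpace (ExpMap r) :=
  TopologicalSpace.induced (fun F : ExpMap r => crSeq r F.1) inferInstance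

/-- `μ` is a `T`-invariant Borel probability measure. -/
def InvProb (T : Circle1 → Circle1) (μ : Measure Circle1) : Prop :=
  IsProbabilityMeasure μ ∧ μ.map T = μ

/-- `β(f,T)`, the maximal ergodic average. -/
noncomputable def beta (f : Circle1 → ℝ) (T : Circle1 → Circle1) : ℝ :=
  sSup ((fun μ : Measure Circle1 => ∫ x, f x ∂μ) '' {μ | InvProb T μ})

/-- `μ` is a maximizing measure for `(f,T)`. -/
def IsMaximizing (f : Circle1 → ℝ) (T : Circle1 → Circle1) (μ : Measure Circle1) : Prop :=
  InvProb T μ ∧ ∫ x, f x ∂μ = beta f T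

/-- `μ` is a periodic measure: an invariant measure supported on a periodic orbit. -/
def IsPeriodicMeasure (T : Circle1 → Circle1) (μ : Measure Circle1) : Prop :=
  InvProb T μ ∧ ∃ x : Circle1, ∃ n : ℕ, 0 < n ∧ T^[n] x = x ∧
    μ (Set.range fun k : ℕ => T^[k] x) = 1

/-- `(f,T)` is uniquely maximized by a periodic measure. -/
def UniqMaxPeriodic (f : Circle1 → ℝ) (T : Circle1 → Circle1) : Prop :=
  ∃ μ : Measure Circle1, IsMaximizing f T μ ∧ IsPeriodicMeasure T μ ∧
    ∀ ν : Measure Circle1, IsMaximizing f T ν → ν = μ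

/-- A (continuous) sub-action for `(f,T)`. -/
def IsSubaction (f : Circle1 → ℝ) (T : Circle1 → Circle1) (g : Circle1 → ℝ) : Prop :=
  Continuous g ∧ ∀ x, g x + f x ≤ g (T x) + beta f T

/-- A calibrated sub-action for `(f,T)`. -/
def IsCalibrated (f : Circle1 → ℝ) (T : Circle1 → Circle1) (g : Circle1 → ℝ) : Prop :=
  IsSubaction f T g ∧ ∀ x, ∃ y, T y = x ∧ g y + f y = g x + beta f T

/-- `G_{f,T}`: the set of Lipschitz calibrated sub-actions of `(f,T)`. -/
def Gset (f : Circle1 → ℝ) (T : Circle1 → Circle1) : Set (Circle1 → ℝ) :=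
  {g | (∃ K : NNReal, LipschitzWith K g) ∧ IsCalibrated f T g}

/-- The set `E_{f,T,g}`. -/
def Eset (f : Circle1 → ℝ) (T : Circle1 → Circle1) (g : Circle1 → ℝ) : Set Circle1 :=
  {x | g x + f x = g (T x) + beta f T}

/-- The set `Λ*_{f,T,g}`. -/
def LambdaStar (f : Circle1 → ℝ) (T : Circle1 → Circle1) (g : Circle1 → ℝ) : Set Circle1 :=
  {x | ∀ n : ℕ, T^[n] x ∈ Eset f T g}

/-- The set `Λ_{f,T,g}`. -/
def Lambda (f : Circle1 → ℝ) (T : Circle1 → Circle1) (g : Circle1 → ℝ) : Set Circle1 :=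
  ⋂ n : ℕ, T^[n] '' LambdaStar f T g

/-- The set `K(f,T)`. -/
def Kset (f : Circle1 → ℝ) (T : Circle1 → Circle1) : Set Circle1 :=
  ⋃ g ∈ Gset f T, Lambda f T g

/-- The `(f,T)`-non-wandering set `Ω(f,T)`. -/
def OmegaSet (f : Circle1 → ℝ) (T : Circle1 → Circle1) : Set Circle1 :=
  {x | ∀ ε > (0 : ℝ), ∃ n : ℕ, 1 ≤ n ∧ ∃ z : Circle1, T^[n] z = x ∧ dist z x < ε ∧
    |∑ i ∈ Finset.range n, (f (T^[i] z) - beta f T)| < ε}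

/-- `A` is a periodic orbit of `T`. -/
def IsPeriodicOrbit (T : Circle1 → Circle1) (A : Set Circle1) : Prop :=
  ∃ x : Circle1, (∃ n : ℕ, 0 < n ∧ T^[n] x = x) ∧ A = Set.range fun k : ℕ => T^[k] x

/-- `A` is a `T`-minimal set: a nonempty compact invariant set with no proper nonempty
compact invariant subset. -/
def IsMinimalSet (T : Circle1 → Circle1) (A : Set Circle1) : Prop :=
  A.Nonempty ∧ IsCompact A ∧ T '' A ⊆ A ∧
    ∀ B ⊆ A, B.Nonempty → IsCompact B → T '' B ⊆ B → B = A

/-- The space of `C^r` families of functions on the circle with `q` parameters,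
i.e. maps `(t,x) ↦ f_t(x)` that are jointly `C^r` (the circle variable via a lift). -/
def FamFun (r : ℕ∞) (q : ℕ) : Type :=
  {G : ((Fin q → ℝ) × ℝ) → ℝ // ContDiff ℝ r G ∧ ∀ t x, G (t, x + 1) = G (t, x)}

noncomputable def famSeq (r : ℕ∞) (q : ℕ) (G : ((Fin q → ℝ) × ℝ) → ℝ) :
    (k : ℕ) → (((Fin q → ℝ) × ℝ) →ᵤ (((Fin q → ℝ) × ℝ) [×k]→L[ℝ] ℝ)) :=
  fun k => UniformFun.ofFun (if (k : ℕ∞) ≤ r then iteratedFDeriv ℝ k G else 0)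

/-- The `C^r` topology on the space of `C^r` families. -/
noncomputable instance (r : ℕ∞) (q : ℕ) : TopologicalSpace (FamFun r q) :=
  TopologicalSpace.induced (fun G : FamFun r q => famSeq r q G.1) inferInstance

/-- The member `f_t : ℝ/ℤ → ℝ` of a family, at the parameter `t`. -/
noncomputable def famMem {r : ℕ∞} {q : ℕ} (G : FamFun r q) (t : Fin q → ℝ) : Circle1 → ℝ :=
  fun z => G.1 (t, rep z)

/-- The product `m_∞` over `ℕ` of Lebesgue measure on `[0,1]`, realised as the pushforward of
the Haar probability measure of the compact group `(ℝ/ℤ)^ℕ` under the coordinatewise choice of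
representatives in `[0,1)`. -/
noncomputable def mInfty : Measure (ℕ → ℝ) :=
  Measure.map (fun (t : ℕ → Circle1) (n : ℕ) => rep (t n))
    (MeasureTheory.Measure.addHaarMeasure (⊤ : TopologicalSpace.PositiveCompacts (ℕ → Circle1)))

/-- `S` is an `N`-dimensionally shy subset of a normed real vector space `V`. -/
def NDimShy {V : Type*} [NormedAddCommGroup V] [NormedSpace ℝ V] (N : ℕ) (S : Set V) : Prop :=
  ∃ φ : Fin N → V, ∀ f : V,
    volume {t : Fin N → ℝ | (∀ i, t i ∈ Set.Icc (0 : ℝ) 1) ∧ f + ∑ i, t i • φ i ∈ S} = 0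

/-- `S` is a finite dimensionally shy subset of a normed real vector space `V`. -/
def FinDimShy {V : Type*} [NormedAddCommGroup V] [NormedSpace ℝ V] (S : Set V) : Prop :=
  ∃ N : ℕ, 0 < N ∧ NDimShy N S

/-- `S` is a shy subset of `V`: there are a compactly supported Borel probability measure `μ`
on `V` and a Borel set `S̃ ⊇ S` all of whose translates are `μ`-null. -/
def IsShy {V : Type*} [NormedAddCommGroup V] [NormedSpace ℝ V] (S : Set V) : Prop :=
  letI : MeasurableSpace V := borel V
  ∃ μ : Measure V, μ Set.univ = 1 ∧ (∃ K : Set V, IsCompact K ∧ μ K = 1) ∧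
    ∃ St : Set V, MeasurableSet St ∧ S ⊆ St ∧
      ∀ v : V, μ ((fun x => x + v) ⁻¹' St) = 0

/-- `S` is a prevalent subset of `V`. -/
def IsPrevalent {V : Type*} [NormedAddCommGroup V] [NormedSpace ℝ V] (S : Set V) : Prop :=
  IsShy Sᶜ

/-- `F` is the (normalized) lift of an orientation-preserving real analytic expanding circle
map of degree `d` fixing `π(0)`. -/
def AnalyticExpandingLift (F : ℝ → ℝ) (d : ℕ) : Prop :=
  (∀ x : ℝ, AnalyticAt ℝ F x) ∧ (∀ x : ℝ, F (x + 1) = F x + d) ∧ StrictMono F ∧ F 0 = 0 ∧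
    2 ≤ d ∧ ∃ C > (0 : ℝ), ∃ l > (1 : ℝ), ∀ n : ℕ, 1 ≤ n → ∀ x : ℝ, C * l ^ n ≤ |deriv (F^[n]) x|

/-- The inverse branches `τ_{i,n} = τ_{i_n} ∘ ⋯ ∘ τ_{i_1}`, where `τ = F⁻¹` and
`τ_i(x) = τ(x+i)`; the word `i` is indexed from `0`, so `i 0` is the first letter `i_1`. -/
noncomputable def tauIter (F : ℝ → ℝ) {d : ℕ} (i : ℕ → Fin d) : ℕ → ℝ → ℝ
  | 0, x => x
  | n + 1, x => Function.invFun F (tauIter F i n x + ((i n : ℕ) : ℝ))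

/-- The function `h^f_i` associated to an infinite word `i`. -/
noncomputable def hSum (F : ℝ → ℝ) {d : ℕ} (i : ℕ → Fin d) (f : Circle1 → ℝ) : ℝ → ℝ :=
  fun x => ∑' n : ℕ,
    (f ((tauIter F i (n + 1) x : ℝ) : Circle1) - f ((tauIter F i (n + 1) 0 : ℝ) : Circle1))

/-- The function `h^f_i` associated to a finite word of length `m` (the first `m` letters
of `i`). -/
noncomputable def hSumFin (F : ℝ → ℝ) {d : ℕ} (i : ℕ → Fin d) (m : ℕ) (f : Circle1 → ℝ) :
    ℝ → ℝ :=
  fun x => ∑ n ∈ Finset.range m,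
    (f ((tauIter F i (n + 1) x : ℝ) : Circle1) - f ((tauIter F i (n + 1) 0 : ℝ) : Circle1))

/-- `i ∈ CL(x,K)`: all backward images of `x` along the word `i` lie over `K`. -/
def WordIn (F : ℝ → ℝ) {d : ℕ} (i : ℕ → Fin d) (x : ℝ) (K : Set Circle1) : Prop :=
  ∀ n : ℕ, 1 ≤ n → ((tauIter F i n x : ℝ) : Circle1) ∈ K

/-- `x` (a real, lying over `K`) is an `f`-supercritical value of `K`. -/
def IsSupercriticalValue (F : ℝ → ℝ) (d : ℕ) (f : Circle1 → ℝ) (K : Set Circle1) (x : ℝ) :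
    Prop :=
  ((x : ℝ) : Circle1) ∈ K ∧ ∃ i j : ℕ → Fin d, WordIn F i x K ∧ WordIn F j x K ∧ i 0 ≠ j 0 ∧
    deriv (hSum F i f) x = deriv (hSum F j f) x

/-- `x` is a critical value of `T|K`. -/
def IsCriticalValue (T : Circle1 → Circle1) (K : Set Circle1) (x : Circle1) : Prop :=
  x ∈ K ∧ ∃ y z, y ∈ K ∧ z ∈ K ∧ y ≠ z ∧ T y = x ∧ T z = x

/-- A critical value `x` of `T|K` is regular: on each side of `x` there is a continuous
inverse branch of `T` selecting the unique preimage in `K`. -/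
def IsRegularCriticalValue (T : Circle1 → Circle1) (K : Set Circle1) (x : Circle1) : Prop :=
  ∃ U : Set Circle1, U ∈ 𝓝 x ∧ IsConnected U ∧
    ∀ b ∈ U \ {x}, ∃ s : Circle1 → Circle1,
      ContinuousOn s (connectedComponentIn (U \ {x}) b) ∧
      (∀ y ∈ connectedComponentIn (U \ {x}) b, T (s y) = y) ∧
      (∀ y ∈ K ∩ connectedComponentIn (U \ {x}) b, T ⁻¹' {y} ∩ K = {s y})

/-- `T|K` is Sturmian-like: every critical value is regular. -/
def SturmianLike (T : Circle1 → Circle1) (K : Set Circle1) : Prop :=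
  ∀ x, IsCriticalValue T K x → IsRegularCriticalValue T K x

/-- `f : ℝ/ℤ → ℝ` is a trigonometric polynomial. -/
def IsTrigPoly (f : Circle1 → ℝ) : Prop :=
  ∃ m : ℕ, ∃ a b : ℕ → ℝ, ∀ x : ℝ,
    f ↑x = a 0 + ∑ k ∈ Finset.range m,
      (a (k + 1) * Real.cos (2 * Real.pi * (k + 1) * x) +
        b (k + 1) * Real.sin (2 * Real.pi * (k + 1) * x))

end

/-! ### Calibrated orbits and the value of `beta` -/

section Orbits

variable {T : Circle1 → Circle1} {f g : Circle1 → ℝ} {b : ℝ}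

lemma subaction_iterate (hsub : ∀ x, g x + f x ≤ g (T x) + b) (k : ℕ) (y : Circle1) :
    g y + ∑ i ∈ Finset.range k, f (T^[i] y) ≤ g (T^[k] y) + k * b := by
  induction k with
  | zero => simp
  | succ k ih =>
    rw [Finset.sum_range_succ, Function.iterate_succ_apply']
    have := hsub (T^[k] y)
    push_cast
    linarith

lemma calibrated_iterate (hcal : ∀ x, ∃ y, T y = x ∧ g y + f y = g x + b) (k : ℕ) (x : Circle1) :
    ∃ y, T^[k] y = x ∧ g y + ∑ i ∈ Finset.range k, f (T^[i] y) = g x + k * b := by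
  induction k with
  | zero => exact ⟨x, by simp⟩
  | succ k ih =>
    obtain ⟨y, hy, hs⟩ := ih
    obtain ⟨z, hz, hzs⟩ := hcal y
    refine ⟨z, by rw [Function.iterate_succ_apply, hz, hy], ?_⟩
    rw [Finset.sum_range_succ']
    simp only [Function.iterate_succ_apply, hz, Function.iterate_zero, id]
    push_cast
    linarith

lemma continuous_integrable {h : Circle1 → ℝ} (hh : Continuous h) (μ : Measure Circle1)
    [IsProbabilityMeasure μ] : Integrable h μ :=
  hh.integrable_of_hasCompactSupport (HasCompactSupport.of_compactSpace h)

/-- The empirical measure of the first `n + 1` points of the orbit of `y`. -/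
noncomputable def empirical (T : Circle1 → Circle1) (y : Circle1) (n : ℕ) : Measure Circle1 :=
  ((n + 1 : ℕ) : ENNReal)⁻¹ • ∑ i ∈ Finset.range (n + 1), Measure.dirac (T^[i] y)

instance empirical_prob (T : Circle1 → Circle1) (y : Circle1) (n : ℕ) :
    IsProbabilityMeasure (empirical T y n) := by
  constructor
  simp only [empirical, Measure.smul_apply, Measure.finsetSum_apply, measure_univ,
    Finset.sum_const, Finset.card_range, smul_eq_mul, nsmul_eq_mul, mul_one]
  exact ENNReal.inv_mul_cancel (by simp) (ENNReal.natCast_ne_top _)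

lemma integral_empirical {h : Circle1 → ℝ} (y : Circle1) (n : ℕ) :
    ∫ x, h x ∂(empirical T y n) = ((n : ℝ) + 1)⁻¹ * ∑ i ∈ Finset.range (n + 1), h (T^[i] y) := by
  rw [empirical, integral_smul_measure, integral_finsetSum_measure]
  · simp only [integral_dirac, ENNReal.toReal_inv, ENNReal.toReal_natCast, smul_eq_mul]
    push_cast
    rfl
  · intro i _
    exact integrable_dirac (by simp)

lemma tendsto_div_zero {l : Filter ℕ} (hl : l ≤ atTop) {u : ℕ → ℝ} {C : ℝ} (hu : ∀ n, |u n| ≤ C) :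
    Tendsto (fun n : ℕ => ((n : ℝ) + 1)⁻¹ * u n) l (𝓝 0) := by
  refine Tendsto.mono_left ?_ hl
  have h1 : Tendsto (fun n : ℕ => ((n : ℝ) + 1)⁻¹ * C) atTop (𝓝 0) := by
    have := (tendsto_one_div_add_atTop_nhds_zero_nat (𝕜 := ℝ)).mul_const C
    simpa using this
  refine squeeze_zero_norm (fun n => ?_) h1
  rw [norm_mul, Real.norm_eq_abs, Real.norm_eq_abs, abs_of_nonneg (by positivity)]
  exact mul_le_mul_of_nonneg_left (hu n) (by positivity)

/-- Krylov–Bogoliubov along backward calibrated orbits: the empirical measures of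
the calibrated preimages `y n` of a point under `T^[n+1]` have Birkhoff averages tending to `b`,
and any limit point of them is invariant. -/
lemma exists_invProb (hT : Continuous T) (hf : Continuous f) (hg : Continuous g)
    (hcal : ∀ x, ∃ y, T y = x ∧ g y + f y = g x + b) :
    ∃ μ : Measure Circle1, InvProb T μ ∧ ∫ x, f x ∂μ = b := by
  choose y hy hs using fun n : ℕ => calibrated_iterate hcal (n + 1) (0 : Circle1)
  let U : Ultrafilter ℕ := hyperfilter ℕ
  have hU : (U : Filter ℕ) ≤ atTop := by
    rw [← Nat.cofinite_eq_atTop]; exact hyperfilter_le_cofinite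
  let m : ℕ → ProbabilityMeasure Circle1 := fun n => ⟨empirical T (y n) n, inferInstance⟩
  obtain ⟨μ, -, hμ⟩ := isCompact_univ.ultrafilter_le_nhds (U.map m) (by simp)
  have hμ' : Tendsto m U (𝓝 μ) := hμ
  have key : ∀ h : Circle1 → ℝ, Continuous h → Tendsto (fun n : ℕ => ((n : ℝ) + 1)⁻¹ *
      ∑ i ∈ Finset.range (n + 1), h (T^[i] (y n))) U (𝓝 (∫ x, h x ∂(μ : Measure Circle1))) := by
    intro h hh
    have := (ProbabilityMeasure.tendsto_iff_forall_integral_tendsto.1 hμ')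
      (BoundedContinuousFunction.mkOfCompact ⟨h, hh⟩)
    refine this.congr fun n => ?_
    exact integral_empirical (h := h) (y n) n
  have bdd : ∀ h : Circle1 → ℝ, Continuous h → ∃ C, ∀ x, |h x| ≤ C := fun h hh => by
    obtain ⟨C, hC⟩ := isCompact_univ.exists_bound_of_continuousOn hh.continuousOn
    exact ⟨C, fun x => hC x trivial⟩
  refine ⟨μ, ⟨inferInstance, ?_⟩, ?_⟩
  · have : IsProbabilityMeasure ((μ : Measure Circle1).map T) :=
      Measure.isProbabilityMeasure_map hT.aemeasurable
    refine ext_of_forall_integral_eq_of_IsFiniteMeasure fun h => ?_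
    rw [integral_map hT.aemeasurable h.continuous.aestronglyMeasurable]
    obtain ⟨C, hC⟩ := bdd h h.continuous
    have h1 := (key _ (h.continuous.comp hT)).sub (key h h.continuous)
    have h2 : Tendsto (fun n : ℕ => ((n : ℝ) + 1)⁻¹ * (h (T^[n+1] (y n)) - h (y n))) U (𝓝 0) :=
      tendsto_div_zero hU (C := C + C) fun n => (abs_sub _ _).trans (add_le_add (hC _) (hC _))
    have h3 := tendsto_nhds_unique h1 (h2.congr fun n => ?_)
    · exact sub_eq_zero.1 h3
    · rw [← mul_sub, ← Finset.sum_sub_distrib]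
      congr 1
      have := Finset.sum_range_sub (fun i => h (T^[i] (y n))) (n + 1)
      simp only [Function.iterate_succ_apply', Function.iterate_zero, id] at this ⊢
      exact this.symm
  · obtain ⟨C, hC⟩ := bdd g hg
    have h2 : Tendsto (fun n : ℕ => ((n : ℝ) + 1)⁻¹ * (g 0 - g (y n))) U (𝓝 0) :=
      tendsto_div_zero hU (C := C + C) fun n => (abs_sub _ _).trans (add_le_add (hC _) (hC _))
    refine tendsto_nhds_unique (key f hf) ?_
    have h3 := h2.add_const b
    rw [zero_add] at h3
    refine h3.congr fun n => ?_
    have h4 := hs n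
    have : ∑ i ∈ Finset.range (n + 1), f (T^[i] (y n)) = (g 0 - g (y n)) + (n + 1) * b := by
      push_cast at h4
      linarith
    rw [this]
    field_simp

lemma integral_le_of_subaction (hT : Continuous T) (hf : Continuous f) (hg : Continuous g)
    (hsub : ∀ x, g x + f x ≤ g (T x) + b) {μ : Measure Circle1} (hμ : InvProb T μ) :
    ∫ x, f x ∂μ ≤ b := by
  obtain ⟨hp, hinv⟩ := hμ
  have h1 : ∫ x, g (T x) ∂μ = ∫ x, g x ∂μ := by
    conv_rhs => rw [← hinv]
    rw [integral_map hT.aemeasurable hg.aestronglyMeasurable]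
  have ig := continuous_integrable hg μ
  have igT : Integrable (fun x => g (T x)) μ := continuous_integrable (hg.comp hT) μ
  have if' := continuous_integrable hf μ
  have h2 : ∫ x, (g x + f x) ∂μ ≤ ∫ x, (g (T x) + b) ∂μ :=
    integral_mono (ig.add if') (igT.add (integrable_const b)) hsub
  rw [integral_add ig if', integral_add igT (integrable_const b), h1] at h2
  simpa using h2

/-- The constant in the calibrated sub-action equation is forced to be `beta f T`. -/
lemma beta_eq_of_calibrated (hT : Continuous T) (hf : Continuous f) (hg : Continuous g)
    (hsub : ∀ x, g x + f x ≤ g (T x) + b)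
    (hcal : ∀ x, ∃ y, T y = x ∧ g y + f y = g x + b) : beta f T = b := by
  refine IsGreatest.csSup_eq ⟨?_, ?_⟩
  · obtain ⟨μ, h1, h2⟩ := exists_invProb hT hf hg hcal
    exact ⟨μ, h1, h2⟩
  · rintro _ ⟨μ, hμ, rfl⟩
    exact integral_le_of_subaction hT hf hg hsub hμ

end Orbits

/-! ### The circle and its lifts -/

lemma coe_rep (z : Circle1) : ((rep z : ℝ) : Circle1) = z := AddCircle.coe_equivIco

lemma coe_int_circle (k : ℤ) : ((k : ℝ) : Circle1) = 0 := by
  rw [AddCircle.coe_eq_zero_iff]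
  exact ⟨k, by simp⟩

lemma exists_int_of_coe_eq {s t : ℝ} (h : (s : Circle1) = t) : ∃ k : ℤ, s = t + k := by
  have : ((s - t : ℝ) : Circle1) = 0 := by
    rw [AddCircle.coe_sub, h, sub_self]
  obtain ⟨k, hk⟩ := (AddCircle.coe_eq_zero_iff _).1 this
  refine ⟨k, ?_⟩
  simp at hk
  linarith

lemma exists_lift_dist (x y : Circle1) :
    ∃ s t : ℝ, (s : Circle1) = x ∧ (t : Circle1) = y ∧ |s - t| = dist x y := by
  let u : ℝ := rep x - rep y
  have hu : ((u : ℝ) : Circle1) = x - y := by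
    rw [AddCircle.coe_sub, coe_rep, coe_rep]
  refine ⟨rep y + (u - round u), rep y, ?_, coe_rep y, ?_⟩
  · rw [AddCircle.coe_add, AddCircle.coe_sub, coe_int_circle, coe_rep, hu]
    simp
  · rw [dist_eq_norm, ← hu, UnitAddCircle.norm_eq]
    congr 1
    ring

lemma dist_coe_le (s t : ℝ) : dist (s : Circle1) (t : Circle1) ≤ |s - t| := by
  rw [dist_eq_norm, ← AddCircle.coe_sub]
  exact (QuotientAddGroup.norm_mk_le_norm : ‖((s - t : ℝ) : Circle1)‖ ≤ ‖s - t‖)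

section Lift

variable {F : ℝ → ℝ} {d : ℤ}

lemma lift_add_int (hd : ∀ x : ℝ, F (x + 1) = F x + d) (x : ℝ) (k : ℤ) :
    F (x + k) = F x + k * d := by
  induction k using Int.induction_on with
  | zero => simp
  | succ k ih =>
    have := hd (x + k)
    push_cast at *
    rw [← add_assoc, this, ih]
    ring
  | pred k ih =>
    have := hd (x + (-k - 1))
    push_cast at *
    rw [show x + (-(k : ℝ) - 1) + 1 = x + -k by ring, ih] at this
    linarith

lemma cmap_coe (hd : ∀ x : ℝ, F (x + 1) = F x + d) (t : ℝ) :
    cmap F (t : Circle1) = (F t : Circle1) := by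
  obtain ⟨k, hk⟩ := exists_int_of_coe_eq (coe_rep (t : Circle1))
  rw [cmap, hk, lift_add_int hd, AddCircle.coe_add]
  have := coe_int_circle (k * d)
  push_cast at this
  rw [this, add_zero]

lemma cmap_iterate_coe (hd : ∀ x : ℝ, F (x + 1) = F x + d) (n : ℕ) (t : ℝ) :
    (cmap F)^[n] (t : Circle1) = (F^[n] t : ℝ) := by
  induction n with
  | zero => rfl
  | succ n ih => rw [Function.iterate_succ_apply', ih, cmap_coe hd, Function.iterate_succ_apply']

lemma continuous_of_lift {X : Type*} [TopologicalSpace X] {h : Circle1 → X}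
    (hh : Continuous fun t : ℝ => h t) : Continuous h :=
  (QuotientAddGroup.isQuotientMap_mk _).continuous_iff.2 hh

lemma cmap_continuous (hF : Continuous F) (hd : ∀ x : ℝ, F (x + 1) = F x + d) :
    Continuous (cmap F) := by
  refine continuous_of_lift ?_
  simp only [cmap_coe hd]
  exact (AddCircle.continuous_mk' 1).comp hF

lemma iterate_add_one (hd : ∀ x : ℝ, F (x + 1) = F x + d) (n : ℕ) (x : ℝ) :
    F^[n] (x + 1) = F^[n] x + ((d ^ n : ℤ) : ℝ) := by
  induction n with
  | zero => simp
  | succ n ih =>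
    rw [Function.iterate_succ_apply', ih, lift_add_int hd, Function.iterate_succ_apply']
    push_cast
    ring

lemma deriv_iterate_eq_prod (hF : Differentiable ℝ F) (n : ℕ) (a : ℝ) :
    deriv F^[n] a = ∏ i ∈ Finset.range n, deriv F (F^[i] a) := by
  induction n with
  | zero => simp
  | succ n ih =>
    rw [Finset.prod_range_succ, ← ih, Function.iterate_succ', deriv_comp _ (hF _) (hF.iterate n _),
      mul_comm]

lemma deriv_periodic {H : ℝ → ℝ} {D : ℝ} (hD : ∀ x, H (x + 1) = H x + D) :
    Function.Periodic (deriv H) 1 := by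
  intro x
  rw [← deriv_comp_add_const]
  simp only [hD]
  simp

lemma expand_of_deriv {H : ℝ → ℝ} (hH : Differentiable ℝ H) {c : ℝ}
    (hc : ∀ a, c ≤ |deriv H a|) (a b : ℝ) : c * |a - b| ≤ |H a - H b| := by
  wlog hab : a < b generalizing a b
  · rcases (not_lt.1 hab).eq_or_lt with h | h
    · simp [h]
    · rw [abs_sub_comm a b, abs_sub_comm (H a)]
      exact this b a h
  obtain ⟨z, -, hz⟩ := exists_deriv_eq_slope H hab hH.continuous.continuousOn hH.differentiableOn
  have h1 := hc z
  rw [hz, abs_div, le_div_iff₀ (abs_pos.2 (sub_ne_zero.2 hab.ne'))] at h1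
  rwa [abs_sub_comm a b, abs_sub_comm (H a)]

lemma lift_surjective {H : ℝ → ℝ} {D : ℤ} (hH : Continuous H) (hD : ∀ x, H (x + 1) = H x + D)
    (hne : D ≠ 0) : Function.Surjective H := by
  intro y
  obtain ⟨m, hm⟩ := exists_nat_ge |y - H 0|
  have hm' := abs_le.1 hm
  have h1 := lift_add_int hD 0 (m * D.sign)
  have h2 := lift_add_int hD 0 (-(m * D.sign))
  have hs : (1 : ℝ) ≤ (D.sign : ℝ) * D := by
    have : 1 ≤ D.sign * D := by
      rw [Int.sign_mul_self_eq_abs]; exact Int.one_le_abs hne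
    exact_mod_cast this
  have hm0 : (0 : ℝ) ≤ m := Nat.cast_nonneg m
  push_cast at h1 h2
  refine mem_range_of_exists_le_of_exists_ge hH ⟨_, h2.le.trans ?_⟩ ⟨_, le_trans ?_ h1.ge⟩
  · nlinarith
  · nlinarith

/-- One round of the contraction estimate: pulling back along a common inverse branch of `F^[N]`
turns a Lipschitz bound `K` for a calibrated sub-action into `(2/3) (K + L)`. -/
lemma lip_improve {f g : Circle1 → ℝ} {b K L : ℝ} {N : ℕ}
    (hd : ∀ x : ℝ, F (x + 1) = F x + d)
    (hexp : ∀ a b, 3 / 2 * |a - b| ≤ |F^[N] a - F^[N] b|)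
    (hsurj : Function.Surjective F^[N]) (hL : 0 ≤ L) (hK : 0 ≤ K)
    (hS : ∀ s t : ℝ, |∑ i ∈ Finset.range N, f (F^[i] s : ℝ)
      - ∑ i ∈ Finset.range N, f (F^[i] t : ℝ)| ≤ L * |s - t|)
    (hsub : ∀ x, g x + f x ≤ g (cmap F x) + b)
    (hcal : ∀ x, ∃ y, cmap F y = x ∧ g y + f y = g x + b)
    (hgK : ∀ s t : ℝ, |g s - g t| ≤ K * |s - t|) (s t : ℝ) :
    |g s - g t| ≤ 2 / 3 * (K + L) * |s - t| := by
  have main : ∀ s t : ℝ, g s - g t ≤ 2 / 3 * (K + L) * |s - t| := by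
    intro s t
    obtain ⟨y, hy, hys⟩ := calibrated_iterate hcal N (s : Circle1)
    obtain ⟨a, rfl⟩ : ∃ a : ℝ, (a : Circle1) = y := ⟨rep y, coe_rep y⟩
    rw [cmap_iterate_coe hd] at hy
    obtain ⟨k, hk⟩ := exists_int_of_coe_eq hy
    obtain ⟨c, hc⟩ := hsurj (t + k)
    have hct := subaction_iterate hsub N (c : Circle1)
    simp only [cmap_iterate_coe hd] at hct hys
    rw [hc, AddCircle.coe_add, coe_int_circle, add_zero] at hct
    have h1 := hexp a c
    rw [hk, hc, add_sub_add_right_eq_sub] at h1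
    have h2 := (abs_le.1 (hgK a c)).2
    have h3 := (abs_le.1 (hS a c)).2
    have h4 : (K + L) * |a - c| ≤ (K + L) * (2 / 3 * |s - t|) :=
      mul_le_mul_of_nonneg_left (by linarith) (by linarith)
    linarith
  rw [abs_le]
  have h1 := main s t
  have h2 := main t s
  rw [abs_sub_comm t s] at h2
  constructor <;> linarith

/-- A Lipschitz calibrated sub-action has Lipschitz constant controlled by `f` and `F` alone. -/
lemma lip_bound {f g : Circle1 → ℝ} {b K L : ℝ} {N : ℕ}
    (hd : ∀ x : ℝ, F (x + 1) = F x + d)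
    (hexp : ∀ a b, 3 / 2 * |a - b| ≤ |F^[N] a - F^[N] b|)
    (hsurj : Function.Surjective F^[N]) (hL : 0 ≤ L) (hK : 0 ≤ K)
    (hS : ∀ s t : ℝ, |∑ i ∈ Finset.range N, f (F^[i] s : ℝ)
      - ∑ i ∈ Finset.range N, f (F^[i] t : ℝ)| ≤ L * |s - t|)
    (hsub : ∀ x, g x + f x ≤ g (cmap F x) + b)
    (hcal : ∀ x, ∃ y, cmap F y = x ∧ g y + f y = g x + b)
    (hgK : ∀ s t : ℝ, |g s - g t| ≤ K * |s - t|) (s t : ℝ) :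
    |g s - g t| ≤ 2 * L * |s - t| := by
  have key : ∀ j : ℕ, ∀ s t : ℝ, |g s - g t| ≤ (2 * L + (2 / 3) ^ j * K) * |s - t| := by
    intro j
    induction j with
    | zero =>
      intro s t
      refine (hgK s t).trans (mul_le_mul_of_nonneg_right ?_ (abs_nonneg _))
      simp; linarith
    | succ j ih =>
      intro s t
      refine (lip_improve hd hexp hsurj hL (by positivity) hS hsub hcal ih s t).trans (le_of_eq ?_)
      ring
  have h1 : Tendsto (fun j : ℕ => (2 * L + (2 / 3 : ℝ) ^ j * K) * |s - t|) atTop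
      (𝓝 ((2 * L + 0 * K) * |s - t|)) :=
    (((tendsto_pow_atTop_nhds_zero_of_lt_one (by norm_num) (by norm_num)).mul_const K).const_add
      _).mul_const _
  have := ge_of_tendsto' h1 fun j => key j s t
  simpa using this

/-- Birkhoff sums of length `N` are Lipschitz, with a constant depending only on bounds
for the derivatives of `f` and `F`. -/
lemma birkhoff_lip {f : Circle1 → ℝ} {A M : ℝ} (hA : 0 ≤ A) (hM : 0 ≤ M)
    (hf : ∀ s t : ℝ, |f s - f t| ≤ A * |s - t|) (hF : ∀ s t, |F s - F t| ≤ M * |s - t|)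
    (N : ℕ) (s t : ℝ) :
    |∑ i ∈ Finset.range N, f (F^[i] s : ℝ) - ∑ i ∈ Finset.range N, f (F^[i] t : ℝ)|
      ≤ (∑ i ∈ Finset.range N, A * M ^ i) * |s - t| := by
  have hit : ∀ i : ℕ, |F^[i] s - F^[i] t| ≤ M ^ i * |s - t| := by
    intro i
    induction i with
    | zero => simp
    | succ i ih =>
      rw [Function.iterate_succ_apply', Function.iterate_succ_apply']
      refine (hF _ _).trans ?_
      rw [pow_succ', mul_assoc]
      exact mul_le_mul_of_nonneg_left ih hM
  rw [← Finset.sum_sub_distrib, Finset.sum_mul]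
  refine (Finset.abs_sum_le_sum_abs _ _).trans (Finset.sum_le_sum fun i _ => ?_)
  refine (hf _ _).trans ?_
  rw [mul_assoc]
  exact mul_le_mul_of_nonneg_left (hit i) hA

end Lift

/-! ### Consequences of `C^1` convergence -/

lemma crSeq_conv {H : ℕ → ℝ → ℝ} {h : ℝ → ℝ}
    (hc : Tendsto (fun n => crSeq 1 (H n)) atTop (𝓝 (crSeq 1 h))) :
    TendstoUniformly H h atTop ∧ TendstoUniformly (fun n => deriv (H n)) (deriv h) atTop := by
  rw [tendsto_pi_nhds] at hc
  constructor
  · have := UniformFun.tendsto_iff_tendstoUniformly.1 (hc 0)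
    simpa [crSeq, Function.comp_def] using this
  · have := UniformFun.tendsto_iff_tendstoUniformly.1 (hc 1)
    simpa [crSeq, Function.comp_def] using this

lemma eventually_bounded {H : ℕ → ℝ → ℝ} {h : ℝ → ℝ} (hc : TendstoUniformly H h atTop)
    (hcont : Continuous h) (hper : Function.Periodic h 1) :
    ∃ A, 0 ≤ A ∧ ∀ᶠ n in atTop, ∀ a, |H n a| ≤ A := by
  obtain ⟨A, hA⟩ := (hper.compact_of_continuous one_ne_zero hcont).isBounded.exists_norm_le
  refine ⟨A + 1, ?_, ?_⟩
  · have := (norm_nonneg _).trans (hA (h 0) (mem_range_self 0))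
    linarith
  · filter_upwards [Metric.tendstoUniformly_iff.1 hc 1 one_pos] with n hn a
    have h1 := hA (h a) (mem_range_self a)
    have h2 := hn a
    rw [Real.dist_eq, abs_sub_comm] at h2
    rw [Real.norm_eq_abs] at h1
    have := abs_sub_abs_le_abs_sub (H n a) (h a)
    linarith

lemma lip_of_deriv {H : ℝ → ℝ} (hH : Differentiable ℝ H) {A : ℝ} (hA : ∀ a, |deriv H a| ≤ A)
    (s t : ℝ) : |H s - H t| ≤ A * |s - t| :=
  convex_univ.norm_image_sub_le_of_norm_deriv_le (fun x _ => hH x) (fun x _ => hA x)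
    (mem_univ t) (mem_univ s)

lemma ultra_tendsto_circle (U : Ultrafilter ℕ) (w : ℕ → Circle1) :
    ∃ z, Tendsto w U (𝓝 z) := by
  obtain ⟨z, -, hz⟩ := isCompact_univ.ultrafilter_le_nhds (U.map w) (by simp)
  exact ⟨z, hz⟩

lemma ultra_tendsto_real (U : Ultrafilter ℕ) {u : ℕ → ℝ} {C : ℝ}
    (hu : ∀ᶠ n in (U : Filter ℕ), |u n| ≤ C) : ∃ z, Tendsto u U (𝓝 z) := by
  obtain ⟨z, -, hz⟩ := (isCompact_Icc (a := -C) (b := C)).ultrafilter_le_nhds (U.map u) (by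
    rw [Filter.le_principal_iff]
    exact hu.mono fun n hn => abs_le.1 hn)
  exact ⟨z, hz⟩

/-- Expansion of a fixed iterate persists under `C^1` perturbation: a sequence of bad points,
reduced modulo `1`, would converge to a point where the limit map fails to expand. -/
lemma eventually_expanding (U : Ultrafilter ℕ) (hU : (U : Filter ℕ) ≤ atTop)
    {F : ℕ → ℝ → ℝ} {F' : ℝ → ℝ} {d : ℕ → ℤ}
    (hF : ∀ n, Differentiable ℝ (F n)) (hd : ∀ n x, F n (x + 1) = F n x + d n)
    (hF' : ContDiff ℝ 1 F') (h0 : TendstoUniformly F F' atTop)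
    (h1 : TendstoUniformly (fun n => deriv (F n)) (deriv F') atTop)
    {N : ℕ} (hN : ∀ a, 2 ≤ |deriv F'^[N] a|) :
    ∀ᶠ n in (U : Filter ℕ), ∀ a, 3 / 2 ≤ |deriv (F n)^[N] a| := by
  by_contra hcon
  rw [← Ultrafilter.eventually_not] at hcon
  have hbad : ∀ n, ∃ a ∈ Icc (0 : ℝ) 1, (¬ ∀ a, 3 / 2 ≤ |deriv (F n)^[N] a|) →
      |deriv (F n)^[N] a| < 3 / 2 := by
    intro n
    by_cases h : ∀ a, 3 / 2 ≤ |deriv (F n)^[N] a|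
    · exact ⟨0, by simp, fun h' => absurd h h'⟩
    · push Not at h
      obtain ⟨a, ha⟩ := h
      have hper := deriv_periodic (iterate_add_one (hd n) N)
      refine ⟨Int.fract a, ⟨Int.fract_nonneg a, (Int.fract_lt_one a).le⟩, fun _ => ?_⟩
      have := hper.sub_int_mul_eq (x := a) ⌊a⌋
      rw [mul_one] at this
      rwa [Int.fract, this]
  choose a haI ha using hbad
  obtain ⟨z, -, hz⟩ := (isCompact_Icc (a := (0 : ℝ)) (b := 1)).ultrafilter_le_nhds (U.map a) (by
    rw [Filter.le_principal_iff]
    exact Filter.Eventually.of_forall (f := (U : Filter ℕ)) haI)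
  have hz' : Tendsto a U (𝓝 z) := hz
  have hit : ∀ i, Tendsto (fun n => (F n)^[i] (a n)) U (𝓝 (F'^[i] z)) := by
    intro i
    induction i with
    | zero => exact hz'
    | succ i ih =>
      simp only [Function.iterate_succ_apply']
      exact (TendstoUniformly.tendsto_comp (fun u hu => hU (h0 u hu))
        hF'.continuous.continuousAt ih)
  have hlim : Tendsto (fun n => |deriv (F n)^[N] (a n)|) U (𝓝 |deriv F'^[N] z|) := by
    simp only [deriv_iterate_eq_prod (hF _), deriv_iterate_eq_prod (hF'.differentiable one_ne_zero)]
    refine (tendsto_finsetProd _ fun i _ => ?_).abs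
    exact TendstoUniformly.tendsto_comp (fun u hu => hU (h1 u hu))
      (hF'.continuous_deriv le_rfl).continuousAt (hit i)
  have hle : |deriv F'^[N] z| ≤ 3 / 2 :=
    le_of_tendsto hlim (hcon.mono fun n hn => (ha n hn).le)
  have := hN z
  linarith

lemma calibrated_lip {f g : Circle1 → ℝ} {F : ℝ → ℝ} {d : ℤ} {N : ℕ} {A M : ℝ}
    (hA0 : 0 ≤ A) (hM0 : 0 ≤ M)
    (hf : Differentiable ℝ fun t : ℝ => f t) (hF : Differentiable ℝ F)
    (hd : ∀ x, F (x + 1) = F x + d)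
    (hA : ∀ a, |deriv (fun t : ℝ => f t) a| ≤ A) (hM : ∀ a, |deriv F a| ≤ M)
    (hexp : ∀ a, 3 / 2 ≤ |deriv F^[N] a|) (hg : g ∈ Gset f (cmap F)) (x y : Circle1) :
    |g x - g y| ≤ 2 * (∑ i ∈ Finset.range N, A * M ^ i) * dist x y := by
  obtain ⟨⟨K, hK⟩, ⟨-, hsub⟩, hcal⟩ := hg
  obtain ⟨s, t, rfl, rfl, hst⟩ := exists_lift_dist x y
  rw [← hst]
  have hexp' := expand_of_deriv (hF.iterate N) hexp
  have hD := iterate_add_one hd N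
  refine lip_bound (K := K) hd hexp' (lift_surjective (hF.iterate N).continuous hD ?_)
    (Finset.sum_nonneg fun i _ => by positivity) K.2
    (birkhoff_lip hA0 hM0 (lip_of_deriv hf hA) (lip_of_deriv hF hM) N) hsub hcal ?_ s t
  · intro h0
    have h1 := hexp' (0 + 1) 0
    rw [hD, h0] at h1
    norm_num at h1
  · intro s t
    refine (hK.dist_le_mul s t).trans ?_
    exact mul_le_mul_of_nonneg_left (dist_coe_le s t) K.2

lemma cmap_uniform {F : ℕ → ℝ → ℝ} {F' : ℝ → ℝ} (h0 : TendstoUniformly F F' atTop) :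
    TendstoUniformly (fun n => cmap (F n)) (cmap F') atTop := by
  rw [Metric.tendstoUniformly_iff] at h0 ⊢
  intro ε hε
  filter_upwards [h0 ε hε] with n hn z
  exact (dist_coe_le _ _).trans_lt (hn (rep z))

lemma fun_uniform {f : ℕ → Circle1 → ℝ} {f' : Circle1 → ℝ}
    (h0 : TendstoUniformly (fun n (t : ℝ) => f n t) (fun t : ℝ => f' t) atTop) :
    TendstoUniformly f f' atTop := by
  intro u hu
  filter_upwards [h0 u hu] with n hn z
  have := hn (rep z)
  rwa [coe_rep] at this

/-! ### Passing to the limit -/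

/-- The limit argument: equi-Lipschitz calibrated sub-actions, normalised to vanish at `0`,
converge along an ultrafilter to a calibrated sub-action of the limit system, and the
orbits witnessing membership in `Lambda` converge as well. -/
lemma mem_Kset_of_limit (U : Ultrafilter ℕ)
    {f : ℕ → Circle1 → ℝ} {T : ℕ → Circle1 → Circle1} {g : ℕ → Circle1 → ℝ}
    {f' : Circle1 → ℝ} {T' : Circle1 → Circle1} {x : ℕ → Circle1} {x0 : Circle1} {C : ℝ}
    (hf' : Continuous f') (hT' : Continuous T')
    (hf : TendstoUniformly f f' (U : Filter ℕ)) (hT : TendstoUniformly T T' (U : Filter ℕ))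
    (hg : ∀ n, g n ∈ Gset (f n) (T n)) (hC0 : 0 ≤ C)
    (hC : ∀ᶠ n in (U : Filter ℕ), ∀ y z, |g n y - g n z| ≤ C * dist y z)
    (hx : ∀ n, x n ∈ Lambda (f n) (T n) (g n)) (hxc : Tendsto x U (𝓝 x0)) :
    x0 ∈ Kset f' T' := by
  have hdist : ∀ z : Circle1, dist z 0 ≤ 1 := fun z => by
    have := AddCircle.norm_le_half_period (p := (1 : ℝ)) (x := z) one_ne_zero
    rw [dist_zero_right]
    norm_num at this
    linarith
  have hbd : ∀ᶠ n in (U : Filter ℕ), ∀ z, |g n z - g n 0| ≤ C := hC.mono fun n hn z =>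
    (hn z 0).trans (mul_le_of_le_one_right hC0 (hdist z))
  choose G hG using fun z => ultra_tendsto_real U (hbd.mono fun n hn => hn z)
  have hGlip : ∀ y z, |G y - G z| ≤ C * dist y z := by
    intro y z
    refine le_of_tendsto ((hG y).sub (hG z)).abs (hC.mono fun n hn => ?_)
    simpa using hn y z
  have hGL : LipschitzWith ⟨C, hC0⟩ G := LipschitzWith.of_dist_le_mul fun y z => hGlip y z
  have hGc : ∀ (w : ℕ → Circle1) (w0 : Circle1), Tendsto w U (𝓝 w0) →
      Tendsto (fun n => g n (w n) - g n 0) U (𝓝 (G w0)) := by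
    intro w w0 hw
    have h1 : Tendsto (fun n => g n (w n) - g n w0) U (𝓝 0) := by
      have h2 : Tendsto (fun n => C * dist (w n) w0) U (𝓝 0) := by
        simpa using (tendsto_iff_dist_tendsto_zero.1 hw).const_mul C
      exact squeeze_zero_norm' (hC.mono fun n hn => hn _ _) h2
    simpa using h1.add (hG w0)
  have hTc : ∀ (w : ℕ → Circle1) (w0 : Circle1), Tendsto w U (𝓝 w0) →
      Tendsto (fun n => T n (w n)) U (𝓝 (T' w0)) := fun w w0 hw =>
    hT.tendsto_comp hT'.continuousAt hw
  have hfc : ∀ (w : ℕ → Circle1) (w0 : Circle1), Tendsto w U (𝓝 w0) →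
      Tendsto (fun n => f n (w n)) U (𝓝 (f' w0)) := fun w w0 hw =>
    hf.tendsto_comp hf'.continuousAt hw
  have hTit : ∀ (k : ℕ) (w : ℕ → Circle1) (w0 : Circle1), Tendsto w U (𝓝 w0) →
      Tendsto (fun n => (T n)^[k] (w n)) U (𝓝 (T'^[k] w0)) := by
    intro k w w0 hw
    induction k with
    | zero => exact hw
    | succ k ih =>
      simp only [Function.iterate_succ_apply']
      exact hTc _ _ ih
  -- The constants `beta` converge because calibrated preimages of `0` do.
  choose p hp hpe using fun n => (hg n).2.2 0
  obtain ⟨p0, hp0⟩ := ultra_tendsto_circle U p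
  obtain ⟨b, hb⟩ : ∃ b, Tendsto (fun n => beta (f n) (T n)) U (𝓝 b) := by
    refine ⟨G p0 + f' p0, ((hGc p p0 hp0).add (hfc p p0 hp0)).congr fun n => ?_⟩
    have := hpe n
    linarith
  have hsub : ∀ z, G z + f' z ≤ G (T' z) + b := by
    intro z
    have hz : Tendsto (fun _ : ℕ => z) U (𝓝 z) := tendsto_const_nhds
    refine le_of_tendsto_of_tendsto' ((hG z).add (hfc _ _ hz))
      ((hGc _ _ (hTc _ _ hz)).add hb) fun n => ?_
    have := (hg n).2.1.2 z
    linarith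
  have hcal : ∀ z, ∃ y, T' y = z ∧ G y + f' y = G z + b := by
    intro z
    choose q hq hqe using fun n => (hg n).2.2 z
    obtain ⟨y, hy⟩ := ultra_tendsto_circle U q
    refine ⟨y, tendsto_nhds_unique (hTc q y hy) (tendsto_const_nhds.congr fun n => (hq n).symm),
      tendsto_nhds_unique ((hGc q y hy).add (hfc q y hy)) (((hG z).add hb).congr fun n => ?_)⟩
    have := hqe n
    linarith
  have hbeta : beta f' T' = b := beta_eq_of_calibrated hT' hf' hGL.continuous hsub hcal
  have hGG : G ∈ Gset f' T' := by
    refine ⟨⟨_, hGL⟩, ⟨hGL.continuous, ?_⟩, ?_⟩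
    · rwa [hbeta]
    · rwa [hbeta]
  refine mem_iUnion₂.2 ⟨G, hGG, mem_iInter.2 fun k => ?_⟩
  choose w hw hwx using fun n => mem_iInter.1 (hx n) k
  obtain ⟨w0, hw0⟩ := ultra_tendsto_circle U w
  refine ⟨w0, fun m => ?_, tendsto_nhds_unique (hTit k w w0 hw0)
    (hxc.congr fun n => (hwx n).symm)⟩
  have h1 := hTit m w w0 hw0
  have h2 := (hGc _ _ h1).add (hfc _ _ h1)
  have h3 := (hGc _ _ (hTc _ _ h1)).add hb
  change G _ + f' _ = G _ + beta f' T'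
  rw [hbeta]
  refine tendsto_nhds_unique h2 (h3.congr fun n => ?_)
  have : g n _ + f n _ = g n _ + beta (f n) (T n) := hw n m
  linarith

/-- Proposition 2.1(iii): `(f,T) ↦ K(f,T)` is upper semi-continuous on `𝓒^1 × 𝓔^1`. -/
theorem Kset_usc (seq : ℕ → CrFun 1 × ExpMap 1) (lim : CrFun 1 × ExpMap 1)
    (hconv : Tendsto seq atTop (𝓝 lim)) (x : ℕ → Circle1) (x0 : Circle1)
    (hx : ∀ n, x n ∈ Kset (seq n).1.1 (cmap (seq n).2.1))
    (hxc : Tendsto x atTop (𝓝 x0)) :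
    x0 ∈ Kset lim.1.1 (cmap lim.2.1) := by
  obtain ⟨hf0, hf1⟩ := crSeq_conv
    ((continuous_induced_dom.tendsto lim.1).comp ((continuous_fst.tendsto lim).comp hconv))
  obtain ⟨hF0, hF1⟩ := crSeq_conv
    ((continuous_induced_dom.tendsto lim.2).comp ((continuous_snd.tendsto lim).comp hconv))
  simp only [Function.comp_apply] at hf0 hf1 hF0 hF1
  let U : Ultrafilter ℕ := hyperfilter ℕ
  have hU : (U : Filter ℕ) ≤ atTop := by
    rw [← Nat.cofinite_eq_atTop]; exact hyperfilter_le_cofinite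
  obtain ⟨hFc, ⟨d', hd'⟩, c, hc, l, hl, hexp⟩ := lim.2.2
  choose d hd using fun n => (seq n).2.2.2.1
  have hfC : ContDiff ℝ 1 fun t : ℝ => lim.1.1 t := lim.1.2
  have hFC : ContDiff ℝ 1 lim.2.1 := hFc
  have hFn : ∀ n, Differentiable ℝ (seq n).2.1 := fun n =>
    ContDiff.differentiable (n := 1) (seq n).2.2.1 one_ne_zero
  have hfn : ∀ n, Differentiable ℝ fun t : ℝ => (seq n).1.1 t := fun n =>
    ContDiff.differentiable (n := 1) (seq n).1.2 one_ne_zero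
  obtain ⟨N, hN1, hN⟩ : ∃ N : ℕ, 1 ≤ N ∧ 2 ≤ c * l ^ N := by
    have h := ((tendsto_pow_atTop_atTop_of_one_lt hl).const_mul_atTop hc).eventually_ge_atTop 2
    obtain ⟨N, h1, h2⟩ := ((eventually_ge_atTop 1).and h).exists
    exact ⟨N, h1, h2⟩
  have hexpN := eventually_expanding U hU hFn hd hFC hF0 hF1
    (fun a => hN.trans (hexp N hN1 a))
  obtain ⟨A, hA0, hA⟩ := eventually_bounded hf1 (hfC.continuous_deriv le_rfl)
    (deriv_periodic (D := 0) fun t => by rw [AddCircle.coe_add_period, add_zero])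
  obtain ⟨M, hM0, hM⟩ := eventually_bounded hF1 (hFC.continuous_deriv le_rfl)
    (deriv_periodic hd')
  choose g hg hxg using fun n => mem_iUnion₂.1 (hx n)
  refine mem_Kset_of_limit U (C := 2 * (∑ i ∈ Finset.range N, A * M ^ i))
    (continuous_of_lift hfC.continuous)
    (cmap_continuous hFC.continuous hd') (fun u hu => hU (fun_uniform hf0 u hu))
    (fun u hu => hU (cmap_uniform hF0 u hu)) hg
    (mul_nonneg zero_le_two (Finset.sum_nonneg fun i _ => by positivity)) ?_ hxg
    (hxc.mono_left hU)
  filter_upwards [hexpN, hU hA, hU hM] with n h1 h2 h3 y z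
  exact calibrated_lip hA0 hM0 (hfn n) (hFn n) (hd n) h2 h3 h1 (hg n) y z
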